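/- arXiv:1408.1437 — 3 statements merged into one kernel-verified Lean document; each statement's English description precedes it below -/
import Mathlib

section
/- Let Z ⊆ ℝ^n and W ⊆ ℝ^m be closed boxes (products of closed intervals) with nonempty interior and let f = (f_1,…,f_n) : Z × W → ℝ^n be Lipschitz continuous (so that its partial derivatives exist Lebesgue-almost everywhere). Suppose that for every i ∈ {1,…,n} there exist signs δ_ij ∈ {−1, 1} (j = 1,…,n) such that, at almost every point of Z × W at which the partial derivatives exist, δ_ij·(∂f_i/∂z_j) ≥ 0 for all j ∈ {1,…,n} and ∂f_i/∂w_j ≥ 0 for all j ∈ {1,…,m}. Then f is componentwise monotone with signature matrix Δ = [δ_ij]. -/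
/-- A map `f : Z × W → ℝⁿ` is *componentwise monotone* on `Z ⊆ ℝⁿ`, `W ⊆ ℝᵐ`
with signature matrix `δ` (entries `±1`) if for every component `i`,
`δ i j * ξ̲ j ≤ δ i j * ξ̄ j` for all `j` and `w̲ ≤ w̄` componentwise imply
`f ξ̲ w̲ i ≤ f ξ̄ w̄ i`. -/
def CwMonotoneOn (n m : ℕ) (Z : Set (Fin n → ℝ)) (W : Set (Fin m → ℝ))
    (f : (Fin n → ℝ) → (Fin m → ℝ) → Fin n → ℝ) (δ : Fin n → Fin n → ℝ) : Prop :=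
  ∀ i : Fin n, ∀ ξl ∈ Z, ∀ ξu ∈ Z, ∀ wl ∈ W, ∀ wu ∈ W,
    (∀ j, δ i j * ξl j ≤ δ i j * ξu j) → (∀ j, wl j ≤ wu j) →
      f ξl wl i ≤ f ξu wu i

/-!
The order relation between two points says that their difference lies in the cone spanned by the
vectors `δᵢⱼ eⱼ` and `eⱼ` of the two factors. The directions along which `fᵢ` has almost everywhere
nonnegative derivative form a convex cone, because by Rademacher's theorem directional derivatives
are almost everywhere linear in the direction; it contains these vectors, hence the whole
displacement. By Fubini, almost every segment parallel to the displacement meets the exceptional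
null set in a null set of parameters, so integrating the derivative along it gives the inequality.
Continuity extends this to every segment in the interior, and moving the endpoints towards an
interior point extends it to segments that touch the boundary.
-/

open MeasureTheory Set Filter Topology

theorem le_of_absolutelyContinuousOnInterval_of_ae_deriv_nonneg {φ : ℝ → ℝ} {a b : ℝ}
    (hab : a ≤ b) (hφ : AbsolutelyContinuousOnInterval φ a b)
    (h : ∀ᵐ t ∂volume.restrict (Icc a b), 0 ≤ deriv φ t) : φ a ≤ φ b := by
  rw [← sub_nonneg, ← hφ.integral_deriv_eq_sub]
  exact intervalIntegral.integral_nonneg_of_ae_restrict hab h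

theorem deriv_comp_add_smul_eq_lineDeriv {𝕜 E F : Type*} [NontriviallyNormedField 𝕜]
    [AddCommGroup E] [Module 𝕜 E] [NormedAddCommGroup F] [NormedSpace 𝕜 F]
    (g : E → F) (p d : E) (t : 𝕜) :
    deriv (fun s : 𝕜 ↦ g (p + s • d)) t = lineDeriv 𝕜 g (p + t • d) d := by
  simp only [lineDeriv, add_assoc, ← add_smul]
  simpa only [add_zero] using (deriv_comp_const_add (fun s : 𝕜 ↦ g (p + s • d)) t 0).symm

theorem lipschitzOnWith_comp_add_smul {𝕜 E F : Type*} [NormedField 𝕜]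
    [SeminormedAddCommGroup E] [NormedSpace 𝕜 E] [PseudoEMetricSpace F] {g : E → F}
    {K : NNReal} {s : Set E} {I : Set 𝕜} {p d : E}
    (hg : LipschitzOnWith K g s) (hI : ∀ t ∈ I, p + t • d ∈ s) :
    LipschitzOnWith (K * ‖d‖₊) (fun t : 𝕜 ↦ g (p + t • d)) I := by
  have hline : LipschitzWith ‖d‖₊ fun t : 𝕜 ↦ p + t • d :=
    .of_dist_le_mul fun s t ↦ by
      rw [dist_add_left, dist_eq_norm, ← sub_smul, norm_smul, mul_comm, ← dist_eq_norm, coe_nnnorm]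
  exact hg.comp hline.lipschitzOnWith hI

theorem ae_ae_add_linearMap {𝕜 E F : Type*} [NontriviallyNormedField 𝕜] [CompleteSpace 𝕜]
    [NormedAddCommGroup E] [NormedSpace 𝕜 E] [LocallyCompactSpace E]
    [MeasurableSpace E] [BorelSpace E] [NormedAddCommGroup F] [NormedSpace 𝕜 F]
    [LocallyCompactSpace F] [MeasurableSpace F] [BorelSpace F]
    (L : E →ₗ[𝕜] F) (μ : Measure E) (ν : Measure F) [μ.IsAddHaarMeasure] [ν.IsAddHaarMeasure]
    {P : F → Prop} (h : ∀ᵐ y ∂ν, P y) : ∀ᵐ y ∂ν, ∀ᵐ x ∂μ, P (y + L x) := by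
  obtain ⟨s, hs, hs_meas, hsP⟩ := h.exists_measurable_mem
  filter_upwards [(ae_ae_add_linearMap_mem_iff L μ ν hs_meas).2 hs] with y hy
  exact hy.mono fun x hx ↦ hsP _ hx

theorem le_of_ae_le_of_isOpen {X Y : Type*} [TopologicalSpace X] [MeasurableSpace X]
    [TopologicalSpace Y] [LinearOrder Y] [OrderClosedTopology Y]
    {μ : Measure X} [μ.IsOpenPosMeasure] {f g : X → Y} {U : Set X}
    (h : ∀ᵐ x ∂μ, x ∈ U → f x ≤ g x) (hU : IsOpen U) (hf : ContinuousOn f U)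
    (hg : ContinuousOn g U) {x : X} (hx : x ∈ U) : f x ≤ g x := by
  have hclosure : x ∈ closure (U ∩ {y | y ∈ U → f y ≤ g y}) :=
    (Measure.dense_of_ae h).open_subset_closure_inter hU hx
  exact ContinuousWithinAt.closure_le hclosure ((hf x hx).mono inter_subset_left)
    ((hg x hx).mono inter_subset_left) fun y hy ↦ hy.2 hy.1

section Convex

theorem tendsto_comp_add_smul_sub_of_mem_interior {E F : Type*} [AddCommGroup E]
    [Module ℝ E] [TopologicalSpace E] [IsTopologicalAddGroup E] [ContinuousSMul ℝ E]
    [TopologicalSpace F] {g : E → F} {s : Set E} (hs : Convex ℝ s)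
    (hg : ContinuousOn g s) {c z : E} (hc : c ∈ interior s) (hz : z ∈ s) :
    Tendsto (fun t : ℝ ↦ g (z + t • (c - z))) (𝓝[>] 0) (𝓝 (g z)) := by
  refine (hg z hz).tendsto.comp (tendsto_nhdsWithin_iff.2 ⟨?_, ?_⟩)
  · have hcont : Continuous fun t : ℝ ↦ z + t • (c - z) := by fun_prop
    simpa only [zero_smul, add_zero] using (hcont.tendsto 0).mono_left nhdsWithin_le_nhds
  · filter_upwards [Ioc_mem_nhdsGT (zero_lt_one' ℝ)] with t ht
    exact interior_subset (hs.add_smul_sub_mem_interior hz hc ht)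

variable {E : Type*} [NormedAddCommGroup E] [NormedSpace ℝ E] [FiniteDimensional ℝ E]
  [MeasurableSpace E] [BorelSpace E] {μ : Measure E} [μ.IsAddHaarMeasure]
  {g : E → ℝ} {K : NNReal}

theorem ae_le_add_of_ae_lineDeriv_nonneg {U : Set E} (hU : IsOpen U) (hUc : Convex ℝ U)
    (hg : LipschitzOnWith K g U) {d : E} (h : ∀ᵐ p ∂μ.restrict U, 0 ≤ lineDeriv ℝ g p d) :
    ∀ᵐ p ∂μ, p ∈ U → p + d ∈ U → g p ≤ g (p + d) := by
  rw [ae_restrict_iff' hU.measurableSet] at h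
  filter_upwards [ae_ae_add_linearMap (LinearMap.toSpanSingleton ℝ E d) volume μ h]
    with p hline hp hpd
  have hseg : ∀ t ∈ Icc (0 : ℝ) 1, p + t • d ∈ U := fun t ht ↦ hUc.add_smul_mem hp hpd ht
  have hac : AbsolutelyContinuousOnInterval (fun t : ℝ ↦ g (p + t • d)) 0 1 :=
    (lipschitzOnWith_comp_add_smul hg <|
      uIcc_of_le (zero_le_one' ℝ) ▸ hseg).absolutelyContinuousOnInterval
  have hderiv : ∀ᵐ t ∂volume.restrict (Icc (0 : ℝ) 1),
      0 ≤ deriv (fun t : ℝ ↦ g (p + t • d)) t := by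
    rw [ae_restrict_iff' measurableSet_Icc]
    filter_upwards [hline] with t ht htI
    rw [deriv_comp_add_smul_eq_lineDeriv]
    exact ht (hseg t htI)
  simpa only [zero_smul, add_zero, one_smul] using
    le_of_absolutelyContinuousOnInterval_of_ae_deriv_nonneg zero_le_one hac hderiv

theorem le_add_of_ae_lineDeriv_nonneg {U : Set E} (hU : IsOpen U) (hUc : Convex ℝ U)
    (hg : LipschitzOnWith K g U) {d : E} (h : ∀ᵐ p ∂μ.restrict U, 0 ≤ lineDeriv ℝ g p d)
    {x : E} (hx : x ∈ U) (hxd : x + d ∈ U) : g x ≤ g (x + d) := by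
  have hshift : Continuous (· + d : E → E) := continuous_add_const d
  have hae : ∀ᵐ p ∂μ, p ∈ U ∩ (· + d) ⁻¹' U → g p ≤ g (p + d) := by
    filter_upwards [ae_le_add_of_ae_lineDeriv_nonneg hU hUc hg h] with p hp hpU
    exact hp hpU.1 hpU.2
  exact le_of_ae_le_of_isOpen hae (hU.inter (hU.preimage hshift))
    (hg.continuousOn.mono inter_subset_left)
    (hg.continuousOn.comp hshift.continuousOn fun p hp ↦ hp.2) ⟨hx, hxd⟩

theorem le_of_ae_lineDeriv_sub_nonneg {s : Set E} (hs : Convex ℝ s)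
    (hs_int : (interior s).Nonempty) (hg : LipschitzOnWith K g s) {x y : E}
    (h : ∀ᵐ p ∂μ.restrict (interior s), 0 ≤ lineDeriv ℝ g p (y - x)) (hx : x ∈ s) (hy : y ∈ s) :
    g x ≤ g y := by
  obtain ⟨c, hc⟩ := hs_int
  refine le_of_tendsto_of_tendsto
    (tendsto_comp_add_smul_sub_of_mem_interior hs hg.continuousOn hc hx)
    (tendsto_comp_add_smul_sub_of_mem_interior hs hg.continuousOn hc hy) ?_
  filter_upwards [Ioc_mem_nhdsGT (zero_lt_one' ℝ)] with t ht
  have hxt := hs.add_smul_sub_mem_interior hx hc ht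
  have hyt := hs.add_smul_sub_mem_interior hy hc ht
  have hshift : y + t • (c - y) = x + t • (c - x) + (1 - t) • (y - x) := by module
  rw [hshift] at hyt ⊢
  refine le_add_of_ae_lineDeriv_nonneg (μ := μ) isOpen_interior hs.interior
    (hg.mono interior_subset) ?_ hxt hyt
  filter_upwards [h] with p hp
  rw [lineDeriv_smul, smul_eq_mul]
  exact mul_nonneg (sub_nonneg.2 ht.2) hp

theorem ae_differentiableAt_interior_of_lipschitzOnWith {F : Type*} [NormedAddCommGroup F]
    [NormedSpace ℝ F] [FiniteDimensional ℝ F] {f : E → F} {s : Set E}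
    (hf : LipschitzOnWith K f s) :
    ∀ᵐ p ∂μ.restrict (interior s), DifferentiableAt ℝ f p := by
  have hint := (hf.mono interior_subset).ae_differentiableWithinAt (μ := μ)
    isOpen_interior.measurableSet
  filter_upwards [hint, ae_restrict_mem isOpen_interior.measurableSet] with p hp hps
  exact hp.differentiableAt (isOpen_interior.mem_nhds hps)

end Convex

section Cone

/-- The cone of directions along which the line derivative of `g` is nonnegative `μ`-almost
everywhere. The almost everywhere differentiability of `g` makes it closed under addition. Since
`lineDeriv` is `0` where it does not exist, such points impose no condition. -/
def aeNonnegLineDerivCone {E : Type*} [NormedAddCommGroup E] [NormedSpace ℝ E] [MeasurableSpace E]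
    (μ : Measure E) (g : E → ℝ) (hg : ∀ᵐ p ∂μ, DifferentiableAt ℝ g p) : PointedCone ℝ E where
  carrier := {d | ∀ᵐ p ∂μ, 0 ≤ lineDeriv ℝ g p d}
  zero_mem' := by simp [lineDeriv_zero]
  add_mem' {d e} hd he := by
    rw [mem_ofPred_eq] at hd he ⊢
    filter_upwards [hg, hd, he] with p hp hdp hep
    rw [hp.lineDeriv_eq_fderiv] at hdp hep ⊢
    rw [map_add]
    exact add_nonneg hdp hep
  smul_mem' c d hd := by
    rw [mem_ofPred_eq] at hd ⊢
    filter_upwards [hd] with p hp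
    change 0 ≤ lineDeriv ℝ g p ((c : ℝ) • d)
    rw [lineDeriv_smul]
    exact smul_nonneg c.2 hp

theorem mem_aeNonnegLineDerivCone {E : Type*} [NormedAddCommGroup E] [NormedSpace ℝ E]
    [MeasurableSpace E] {μ : Measure E} {g : E → ℝ} {hg : ∀ᵐ p ∂μ, DifferentiableAt ℝ g p} {d : E} :
    d ∈ aeNonnegLineDerivCone μ g hg ↔ ∀ᵐ p ∂μ, 0 ≤ lineDeriv ℝ g p d :=
  Iff.rfl

variable {ι κ : Type*} [Finite ι] [DecidableEq ι] [Finite κ] [DecidableEq κ]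

theorem mem_pointedCone_of_smul_single_mem {C : PointedCone ℝ (ι → ℝ)} {δ x : ι → ℝ}
    (hδ : ∀ j, δ j ≠ 0) (hC : ∀ j, δ j • Pi.single j 1 ∈ C) (hx : ∀ j, 0 ≤ δ j * x j) :
    x ∈ C := by
  have := Fintype.ofFinite ι
  have hcoeff : ∀ j, 0 ≤ x j / δ j := fun j ↦ by
    rw [← mul_div_mul_left (x j) (δ j) (hδ j)]
    exact div_nonneg (hx j) (mul_self_nonneg _)
  have hsum : x = ∑ j, (x j / δ j) • δ j • Pi.single j (1 : ℝ) := by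
    simp_rw [smul_smul, div_mul_cancel₀ _ (hδ _)]
    exact pi_eq_sum_univ' x
  rw [hsum]
  exact C.sum_mem fun j _ ↦ C.smul_mem (hcoeff j) (hC j)

theorem prodMk_mem_pointedCone_of_single_mem {C : PointedCone ℝ ((ι → ℝ) × (κ → ℝ))}
    {δ x : ι → ℝ} {y : κ → ℝ} (hδ : ∀ j, δ j ≠ 0)
    (hfst : ∀ j, δ j • (Pi.single j 1, 0) ∈ C) (hsnd : ∀ j, (0, Pi.single j 1) ∈ C)
    (hx : ∀ j, 0 ≤ δ j * x j) (hy : ∀ j, 0 ≤ y j) : (x, y) ∈ C := by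
  have hx_mem : x ∈ C.comap (LinearMap.inl ℝ _ _) :=
    mem_pointedCone_of_smul_single_mem hδ (fun j ↦ by simpa using hfst j) hx
  have hy_mem : y ∈ C.comap (LinearMap.inr ℝ _ _) :=
    mem_pointedCone_of_smul_single_mem (δ := 1) (fun _ ↦ one_ne_zero)
      (fun j ↦ by simpa using hsnd j) (by simpa using hy)
  simpa using C.add_mem hx_mem hy_mem

end Cone

theorem cwMonotone_of_ae_sign_stable_partials_general {n m : ℕ}
    {Z : Set (Fin n → ℝ)} {W : Set (Fin m → ℝ)} (hZ : Convex ℝ Z) (hW : Convex ℝ W)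
    (hZint : (interior Z).Nonempty) (hWint : (interior W).Nonempty)
    {f : (Fin n → ℝ) → (Fin m → ℝ) → Fin n → ℝ} {K : NNReal}
    (hf : LipschitzOnWith K (fun p : (Fin n → ℝ) × (Fin m → ℝ) ↦ f p.1 p.2) (Z ×ˢ W))
    {δ : Fin n → Fin n → ℝ} (hδ : ∀ i j, δ i j ≠ 0)
    (hae : ∀ᵐ p : (Fin n → ℝ) × (Fin m → ℝ) ∂volume.restrict (Z ×ˢ W), ∀ i : Fin n,
      (∀ j : Fin n,
        LineDifferentiableAt ℝ (fun q : (Fin n → ℝ) × (Fin m → ℝ) ↦ f q.1 q.2 i) p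
          (Pi.single j 1, 0) →
        0 ≤ δ i j * lineDeriv ℝ (fun q : (Fin n → ℝ) × (Fin m → ℝ) ↦ f q.1 q.2 i) p
          (Pi.single j 1, 0)) ∧
      (∀ j : Fin m,
        LineDifferentiableAt ℝ (fun q : (Fin n → ℝ) × (Fin m → ℝ) ↦ f q.1 q.2 i) p
          (0, Pi.single j 1) →
        0 ≤ lineDeriv ℝ (fun q : (Fin n → ℝ) × (Fin m → ℝ) ↦ f q.1 q.2 i) p
          (0, Pi.single j 1))) :
    CwMonotoneOn n m Z W f δ := by
  intro i ξl hξl ξu hξu wl hwl wu hwu hξ hw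
  have : (volume : Measure ((Fin n → ℝ) × (Fin m → ℝ))).IsAddHaarMeasure :=
    Measure.prod.instIsAddHaarMeasure volume volume
  let g : (Fin n → ℝ) × (Fin m → ℝ) → ℝ := fun q ↦ f q.1 q.2 i
  have hg : LipschitzOnWith K g (Z ×ˢ W) := fun p hp q hq ↦
    (edist_le_pi_edist (f p.1 p.2) (f q.1 q.2) i).trans (hf hp hq)
  have hint : (interior (Z ×ˢ W)).Nonempty := interior_prod_eq Z W ▸ hZint.prod hWint
  have hdiff : ∀ᵐ p ∂volume.restrict (interior (Z ×ˢ W)), DifferentiableAt ℝ g p :=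
    ae_differentiableAt_interior_of_lipschitzOnWith hg
  have hsign := ae_restrict_of_ae_restrict_of_subset interior_subset hae
  have hdir : (ξu, wu) - (ξl, wl) ∈ aeNonnegLineDerivCone _ g hdiff := by
    refine prodMk_mem_pointedCone_of_single_mem (hδ i) (fun j ↦ ?_) (fun j ↦ ?_)
      (fun j ↦ ?_) (fun j ↦ sub_nonneg.2 (hw j))
    · filter_upwards [hsign, hdiff] with p hp hgp
      rw [lineDeriv_smul]
      exact (hp i).1 j hgp.lineDifferentiableAt
    · filter_upwards [hsign, hdiff] with p hp hgp
      exact (hp i).2 j hgp.lineDifferentiableAt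
    · simpa only [Pi.sub_apply, mul_sub, sub_nonneg] using hξ j
  exact le_of_ae_lineDeriv_sub_nonneg (hZ.prod hW) hint hg (mem_aeNonnegLineDerivCone.1 hdir)
    ⟨hξl, hwl⟩ ⟨hξu, hwu⟩

/-- **Lemma 1.** Let `Z ⊆ ℝⁿ` and `W ⊆ ℝᵐ` be closed boxes with nonempty
interior and let `f : Z × W → ℝⁿ` be Lipschitz.  If there are signs `δ i j ∈ {−1,1}`
such that at almost every point of `Z × W` where the partial derivatives exist we have
`δ i j * ∂fᵢ/∂zⱼ ≥ 0` and `∂fᵢ/∂wⱼ ≥ 0`, then `f` is componentwise monotone with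
signature matrix `δ`. -/
theorem cwMonotone_of_ae_sign_stable_partials (n m : ℕ)
    (a b : Fin n → ℝ) (u v : Fin m → ℝ)
    (Z : Set (Fin n → ℝ)) (W : Set (Fin m → ℝ))
    (hZ : Z = Set.Icc a b) (hW : W = Set.Icc u v)
    (hZint : (interior Z).Nonempty) (hWint : (interior W).Nonempty)
    (f : (Fin n → ℝ) → (Fin m → ℝ) → Fin n → ℝ)
    (K : NNReal)
    (hf : LipschitzOnWith K (fun p : (Fin n → ℝ) × (Fin m → ℝ) => f p.1 p.2) (Z ×ˢ W))
    (δ : Fin n → Fin n → ℝ) (hδ : ∀ i j, δ i j = 1 ∨ δ i j = -1)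
    (hae : ∀ᵐ p : (Fin n → ℝ) × (Fin m → ℝ)
        ∂(MeasureTheory.volume.restrict (Z ×ˢ W)),
      ∀ i : Fin n,
        (∀ j : Fin n,
          LineDifferentiableAt ℝ (fun q : (Fin n → ℝ) × (Fin m → ℝ) => f q.1 q.2 i) p
            (Pi.single j 1, 0) →
          0 ≤ δ i j *
            lineDeriv ℝ (fun q : (Fin n → ℝ) × (Fin m → ℝ) => f q.1 q.2 i) p
              (Pi.single j 1, 0)) ∧
        (∀ j : Fin m,
          LineDifferentiableAt ℝ (fun q : (Fin n → ℝ) × (Fin m → ℝ) => f q.1 q.2 i) p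
            (0, Pi.single j 1) →
          0 ≤ lineDeriv ℝ (fun q : (Fin n → ℝ) × (Fin m → ℝ) => f q.1 q.2 i) p
            (0, Pi.single j 1))) :
    CwMonotoneOn n m Z W f δ := by
  subst hZ hW
  exact cwMonotone_of_ae_sign_stable_partials_general (convex_Icc a b) (convex_Icc u v) hZint hWint
    hf (fun i j ↦ by rcases hδ i j with h | h <;> norm_num [h]) hae
end

section
/- Under Assumption 1, for every fixed signal input s the traffic network update map (x, d) ↦ F(x, s, d) = (F_l(x, s, d))_{l∈L} on X × [0,∞)^L is componentwise monotone with signature matrix given by δ_{lk} = −1 if k ∈ L^adj_l and δ_{lk} = +1 otherwise. In particular, each F_l is nondecreasing in x_k for every k ∈ L^down_l ∪ L^up_l, nonincreasing in x_k for every k ∈ L^adj_l, independent of x_k for all other k, and nondecreasing in each d_k. -/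
open Finset
open scoped Classical

/-- Outflow `f^out_l(x, s)` of link `l` under signal `s`. -/
noncomputable def fout {L : Type*} [Fintype L]
    (c xcap : L → ℝ) (β α : L → L → ℝ) (s : Finset L)
    (x : L → ℝ) (l : L) : ℝ :=
  if l ∈ s then
    (Finset.univ.filter fun k => 0 < β l k).fold min (min (x l) (c l))
      fun k => α l k / β l k * (xcap k - x k)
  else 0

/-- Queue update `F_l(x, s, d)`, with `L^up_l = {j : η j = τ l}`. -/
noncomputable def Fupd {L V : Type*} [Fintype L]
    (η : L → V) (τ : L → Option V)
    (c xcap : L → ℝ) (β α : L → L → ℝ) (s : Finset L)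
    (x d : L → ℝ) (l : L) : ℝ :=
  min (xcap l)
    (x l - fout c xcap β α s x l
      + ∑ j ∈ Finset.univ.filter (fun j => τ l = some (η j)), β j l * fout c xcap β α s x j
      + d l)

/-!
Raising `x l` relaxes link `l` itself but tightens the supply constraint it imposes upstream.
Split `x l = min (x l) (c l) + max (x l) (c l) - c l`: the first part covers the growth of the
outflow of `l`, and the second the loss of inflow into `l`. Indeed, Assumption 1 says that the
supply of `l` cannot bind while `x l ≤ c l`, so the inflow depends on `x l` only through
`max (x l) (c l)`, and it decreases with slope at most the sum of the supply ratios, which is at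
most one.
-/

/-- `f` is nondecreasing in the coordinates in `P`, nonincreasing in the coordinates in `N`, and
depends on no coordinate outside `P ∪ N`. Its dependence on the coordinates in `P ∩ N` is
unrestricted, so `P` and `N` should be disjoint. -/
def MixedMonotone {ι R M : Type*} [LE R] [LE M] (P N : Set ι) (f : (ι → R) → M) : Prop :=
  ∀ ⦃x y : ι → R⦄, (∀ k ∈ P, x k ≤ y k) → (∀ k ∈ N, y k ≤ x k) → f x ≤ f y

namespace MixedMonotone

variable {ι R M : Type*} {P N P' N' : Set ι} {k : ι}

theorem mono [LE R] [LE M] {f : (ι → R) → M} (hf : MixedMonotone P N f) (hP : P ⊆ P')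
    (hN : N ⊆ N') : MixedMonotone P' N' f :=
  fun _ _ hpos hneg ↦ hf (fun k hk ↦ hpos k (hP hk)) (fun k hk ↦ hneg k (hN hk))

theorem add [LE R] [Preorder M] [AddCommMonoid M] [IsOrderedAddMonoid M] {f g : (ι → R) → M}
    (hf : MixedMonotone P N f) (hg : MixedMonotone P N g) :
    MixedMonotone P N fun x ↦ f x + g x :=
  fun _ _ hpos hneg ↦ add_le_add (hf hpos hneg) (hg hpos hneg)

theorem sum [LE R] [Preorder M] [AddCommMonoid M] [IsOrderedAddMonoid M] {κ : Type*}
    {t : Finset κ} {f : κ → (ι → R) → M} (hf : ∀ j ∈ t, MixedMonotone P N (f j)) :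
    MixedMonotone P N fun x ↦ ∑ j ∈ t, f j x :=
  fun _ _ hpos hneg ↦ sum_le_sum fun j hj ↦ hf j hj hpos hneg

theorem monotone_update [Preorder R] [Preorder M] [DecidableEq ι] {f : (ι → R) → M}
    (hf : MixedMonotone P N f) (hk : k ∉ N) (x : ι → R) :
    Monotone fun p ↦ f (Function.update x k p) := fun p q hpq ↦
  hf (fun m _ ↦ Function.update_mono hpq m) fun m hm ↦ by
    simp only [Function.update_of_ne (ne_of_mem_of_not_mem hm hk), le_refl]

theorem antitone_update [Preorder R] [Preorder M] [DecidableEq ι] {f : (ι → R) → M}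
    (hf : MixedMonotone P N f) (hk : k ∉ P) (x : ι → R) :
    Antitone fun p ↦ f (Function.update x k p) := fun p q hpq ↦
  hf (fun m hm ↦ by simp only [Function.update_of_ne (ne_of_mem_of_not_mem hm hk), le_refl])
    fun m _ ↦ Function.update_mono hpq m

theorem update_eq_update [Preorder R] [PartialOrder M] [DecidableEq ι] {f : (ι → R) → M}
    (hf : MixedMonotone P N f) (hkP : k ∉ P) (hkN : k ∉ N) (x : ι → R) (p q : R) :
    f (Function.update x k p) = f (Function.update x k q) := by
  have hle (p q : R) : f (Function.update x k p) ≤ f (Function.update x k q) :=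
    hf (fun m hm ↦ by simp only [Function.update_of_ne (ne_of_mem_of_not_mem hm hkP), le_refl])
      fun m hm ↦ by simp only [Function.update_of_ne (ne_of_mem_of_not_mem hm hkN), le_refl]
  exact (hle p q).antisymm (hle q p)

theorem le_of_forall_mul_le_mul [Ring R] [LinearOrder R] [IsStrictOrderedRing R] [LE M]
    {f : (ι → R) → M} (hf : MixedMonotone P N f) {δ x y : ι → R} (hP : ∀ k ∈ P, 0 < δ k)
    (hN : ∀ k ∈ N, δ k < 0) (hxy : ∀ k, δ k * x k ≤ δ k * y k) : f x ≤ f y :=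
  hf (fun k hk ↦ le_of_mul_le_mul_left (hxy k) (hP k hk))
    fun k hk ↦ (mul_le_mul_left_of_neg (hN k hk)).1 (hxy k)

end MixedMonotone

section Links

variable {L V : Type*}

/-- `L^down_l`: the links leaving the downstream intersection of `l`, together with `l` itself. -/
def downLinks (η : L → V) (τ : L → Option V) (l : L) : Set L := {k | τ k = some (η l)} ∪ {l}

/-- `L^up_l`: the links entering the upstream intersection of `l`. -/
def upLinks (η : L → V) (τ : L → Option V) (l : L) : Set L := {k | τ l = some (η k)}

/-- `L^adj_l`: the other links leaving the upstream intersection of `l`. Since `none` encodes a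
missing upstream intersection, all entry links are adjacent to each other. -/
def adjLinks (τ : L → Option V) (l : L) : Set L := {k | k ≠ l ∧ τ k = τ l}

theorem disjoint_downLinks_union_upLinks_adjLinks {η : L → V} {τ : L → Option V}
    (hself : ∀ l, some (η l) ≠ τ l) (l : L) :
    Disjoint (downLinks η τ l ∪ upLinks η τ l) (adjLinks τ l) := by
  refine Set.disjoint_left.2 ?_
  rintro k ((hdown | hkl) | hup) ⟨hne, hadj⟩
  · exact hself l (hdown.symm.trans hadj)
  · exact hne hkl
  · exact hself k (hup.symm.trans hadj.symm)

end Links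

section Outflow

variable {L : Type*} [Fintype L] {c xcap : L → ℝ} {β α : L → L → ℝ} {s : Finset L}
  {x : L → ℝ} {j l : L}

theorem fout_of_notMem (hl : l ∉ s) : fout c xcap β α s x l = 0 := if_neg hl

theorem le_fout_iff (hl : l ∈ s) {b : ℝ} :
    b ≤ fout c xcap β α s x l ↔
      b ≤ min (x l) (c l) ∧ ∀ k, 0 < β l k → b ≤ α l k / β l k * (xcap k - x k) := by
  simp only [fout, if_pos hl, le_fold_min, mem_filter, mem_univ, true_and]

theorem mixedMonotone_min_sub_fout (hα : ∀ k, 0 ≤ α l k) :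
    MixedMonotone ({k | 0 < β l k} ∪ {l}) ∅
      fun x ↦ min (x l) (c l) - fout c xcap β α s x l := by
  intro x y hpos _
  have hmin : min (x l) (c l) ≤ min (y l) (c l) := min_le_min_right _ (hpos l (.inr rfl))
  by_cases hl : l ∈ s
  · obtain ⟨hdemand, hsupply⟩ := (le_fout_iff hl).1 (le_refl (fout c xcap β α s y l))
    suffices fout c xcap β α s y l - (min (y l) (c l) - min (x l) (c l)) ≤
        fout c xcap β α s x l by linarith
    refine (le_fout_iff hl).2 ⟨by linarith, fun k hk ↦ ?_⟩
    calc fout c xcap β α s y l - (min (y l) (c l) - min (x l) (c l))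
      _ ≤ fout c xcap β α s y l := sub_le_self _ (sub_nonneg.2 hmin)
      _ ≤ α l k / β l k * (xcap k - y k) := hsupply k hk
      _ ≤ α l k / β l k * (xcap k - x k) :=
        mul_le_mul_of_nonneg_left (sub_le_sub_left (hpos k (.inl hk)) _)
          (div_nonneg (hα k) hk.le)
  · simpa only [fout_of_notMem hl, sub_zero] using hmin

theorem mixedMonotone_fout_add_mul (hj : j ∈ s) (hα : ∀ k, 0 ≤ α j k) (hβ : 0 ≤ β j l) :
    MixedMonotone {j, l} {k | k ≠ l ∧ 0 < β j k}
      fun x ↦ fout c xcap β α s x j + α j l / β j l * x l := by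
  intro x y hpos hneg
  obtain ⟨hdemand, hsupply⟩ := (le_fout_iff hj).1 (le_refl (fout c xcap β α s x j))
  have hloss : α j l / β j l * x l ≤ α j l / β j l * y l :=
    mul_le_mul_of_nonneg_left (hpos l (.inr rfl)) (div_nonneg (hα l) hβ)
  suffices fout c xcap β α s x j - (α j l / β j l * y l - α j l / β j l * x l) ≤
      fout c xcap β α s y j by linarith
  refine (le_fout_iff hj).2 ⟨?_, fun k hk ↦ ?_⟩
  · linarith [min_le_min_right (c j) (hpos j (.inl rfl))]
  · rcases eq_or_ne k l with rfl | hkl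
    · linarith [hsupply k hk]
    · have hrelax : α j k / β j k * (xcap k - x k) ≤ α j k / β j k * (xcap k - y k) :=
        mul_le_mul_of_nonneg_left (sub_le_sub_left (hneg k ⟨hkl, hk⟩) _)
          (div_nonneg (hα k) hk.le)
      linarith [hsupply k hk]

theorem fout_update_max (hj : j ∈ s) (hjl : j ≠ l) (hα : 0 < α j l) (hβ : 0 < β j l)
    (hA1 : c l ≤ xcap l - β j l / α j l * c j) :
    fout c xcap β α s (Function.update x l (max (x l) (c l))) j = fout c xcap β α s x j := by
  have hsupply : c j ≤ α j l / β j l * (xcap l - c l) := by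
    rw [← div_le_iff₀' (div_pos hα hβ), div_eq_inv_mul, inv_div]
    exact le_sub_comm.1 hA1
  refine eq_of_forall_le_iff fun b ↦ ?_
  rw [le_fout_iff hj, le_fout_iff hj, Function.update_of_ne hjl]
  refine and_congr_right fun hb ↦ forall₂_congr fun k _ ↦ ?_
  rcases eq_or_ne k l with rfl | hkl
  · have hbc : b ≤ α j k / β j k * (xcap k - c k) := (hb.trans (min_le_right _ _)).trans hsupply
    rw [Function.update_self, ← min_sub_sub_left, mul_min_of_nonneg _ _ (div_pos hα hβ).le,
      le_min_iff, and_iff_left hbc]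
  · rw [Function.update_of_ne hkl]

theorem mixedMonotone_fout_add_mul_max (hj : j ∈ s) (hjl : j ≠ l) (hα : ∀ k, 0 < α j k)
    (hβ : 0 < β j l) (hA1 : c l ≤ xcap l - β j l / α j l * c j) :
    MixedMonotone {j, l} {k | k ≠ l ∧ 0 < β j k}
      fun x ↦ fout c xcap β α s x j + α j l / β j l * max (x l) (c l) := by
  intro x y hpos hneg
  have hle := mixedMonotone_fout_add_mul (c := c) (xcap := xcap) hj (fun k ↦ (hα k).le) hβ.le
    (x := Function.update x l (max (x l) (c l))) (y := Function.update y l (max (y l) (c l)))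
    ?_ ?_
  · simpa only [fout_update_max hj hjl (hα l) hβ hA1, Function.update_self] using hle
  · rintro k (rfl | rfl)
    · simpa only [Function.update_of_ne hjl] using hpos k (.inl rfl)
    · simpa only [Function.update_self] using max_le_max_right _ (hpos k (.inr rfl))
  · rintro k ⟨hkl, hk⟩
    simpa only [Function.update_of_ne hkl] using hneg k ⟨hkl, hk⟩

theorem mixedMonotone_mul_fout_add_mul_max (hjl : j ≠ l) (hα : ∀ k, 0 < α j k)
    (hβ : 0 ≤ β j l) (hA1 : 0 < β j l → c l ≤ xcap l - β j l / α j l * c j) :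
    MixedMonotone {j, l} {k | k ≠ l ∧ 0 < β j k}
      fun x ↦ β j l * fout c xcap β α s x j + (if j ∈ s then α j l else 0) * max (x l) (c l) := by
  intro x y hpos hneg
  by_cases hj : j ∈ s
  · simp only [if_pos hj]
    rcases hβ.eq_or_lt' with hzero | hβpos
    · simpa only [hzero, zero_mul, zero_add] using
        mul_le_mul_of_nonneg_left (max_le_max_right (c l) (hpos l (.inr rfl))) (hα l).le
    · simpa only [mul_add, ← mul_assoc, mul_div_cancel₀ (α j l) hβpos.ne'] using
        mul_le_mul_of_nonneg_left
          (mixedMonotone_fout_add_mul_max hj hjl hα hβpos (hA1 hβpos) hpos hneg) hβ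
  · simp only [fout_of_notMem hj, if_neg hj, mul_zero, zero_mul, le_refl]

end Outflow

section Network

variable {L V : Type*} [Fintype L] {η : L → V} {τ : L → Option V} {c xcap : L → ℝ}
  {β α : L → L → ℝ} {s : Finset L}

theorem mixedMonotone_inflow_add_max (hself : ∀ l, some (η l) ≠ τ l) (hβ : ∀ l k, 0 ≤ β l k)
    (hβsupp : ∀ l k, 0 < β l k → τ k = some (η l)) (hα : ∀ l k, 0 < α l k) {l : L}
    (hαsum : ∑ j ∈ univ.filter (fun j ↦ j ∈ s ∧ some (η j) = τ l), α j l ≤ 1)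
    (hA1 : ∀ j, τ l = some (η j) → 0 < β j l → c l ≤ xcap l - β j l / α j l * c j) :
    MixedMonotone (upLinks η τ l ∪ {l}) (adjLinks τ l) fun x ↦
      ∑ j ∈ univ.filter (fun j ↦ τ l = some (η j)), β j l * fout c xcap β α s x j +
        max (x l) (c l) := by
  set A := ∑ j ∈ univ.filter (fun j ↦ j ∈ s ∧ some (η j) = τ l), α j l with hA
  have hAsum : ∑ j ∈ univ.filter (fun j ↦ τ l = some (η j)), (if j ∈ s then α j l else 0) = A := by
    rw [hA, ← sum_filter, filter_filter]
    simp only [and_comm, eq_comm]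
  have hupstream : MixedMonotone (upLinks η τ l ∪ {l}) (adjLinks τ l) fun x ↦
      ∑ j ∈ univ.filter (fun j ↦ τ l = some (η j)),
        (β j l * fout c xcap β α s x j + (if j ∈ s then α j l else 0) * max (x l) (c l)) := by
    refine .sum fun j hj ↦ ?_
    have hup : τ l = some (η j) := (mem_filter.1 hj).2
    have hjl : j ≠ l := by
      rintro rfl
      exact hself j hup.symm
    refine (mixedMonotone_mul_fout_add_mul_max hjl (hα j) (hβ j l) (hA1 j hup)).mono ?_ ?_
    · rintro k (rfl | rfl)
      · exact .inl hup
      · exact .inr rfl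
    · exact fun k hk ↦ ⟨hk.1, (hβsupp j k hk.2).trans hup.symm⟩
  have hrest : MixedMonotone (upLinks η τ l ∪ {l}) (adjLinks τ l) fun x : L → ℝ ↦
      (1 - A) * max (x l) (c l) := fun x y hpos _ ↦
    mul_le_mul_of_nonneg_left (max_le_max_right _ (hpos l (.inr rfl))) (sub_nonneg.2 hαsum)
  intro x y hpos hneg
  have hle := hupstream.add hrest hpos hneg
  simp only [sum_add_distrib, ← sum_mul, hAsum] at hle
  linarith

theorem mixedMonotone_Fupd_arrivals (x : L → ℝ) (l : L) :
    MixedMonotone {l} ∅ fun d ↦ Fupd η τ c xcap β α s x d l := fun _ _ hpos _ ↦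
  min_le_min_left _ (add_le_add_right (hpos l rfl) _)

theorem traffic_componentwise_monotone_general (hself : ∀ l, some (η l) ≠ τ l)
    (hβ : ∀ l k, 0 ≤ β l k) (hβsupp : ∀ l k, 0 < β l k → τ k = some (η l))
    (hα : ∀ l k, 0 < α l k)
    (hαsum : ∀ k, ∑ j ∈ univ.filter (fun j ↦ j ∈ s ∧ some (η j) = τ k), α j k ≤ 1)
    (hA1 : ∀ l k, τ l = some (η k) → 0 < β k l → c l ≤ xcap l - β k l / α k l * c k) (l : L) :
    (∀ d, MixedMonotone (downLinks η τ l ∪ upLinks η τ l) (adjLinks τ l)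
      fun x ↦ Fupd η τ c xcap β α s x d l) ∧
    ∀ x, MixedMonotone {l} ∅ fun d ↦ Fupd η τ c xcap β α s x d l := by
  refine ⟨fun d x y hpos hneg ↦ min_le_min_left _ ?_, fun x ↦ mixedMonotone_Fupd_arrivals x l⟩
  have hown : MixedMonotone (downLinks η τ l ∪ upLinks η τ l) (adjLinks τ l) fun x ↦
      min (x l) (c l) - fout c xcap β α s x l :=
    (mixedMonotone_min_sub_fout fun k ↦ (hα l k).le).mono
      ((Set.union_subset_union_left _ (hβsupp l)).trans Set.subset_union_left)
      (Set.empty_subset _)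
  have hinflow := (mixedMonotone_inflow_add_max hself hβ hβsupp hα (hαsum l) (hA1 l)).mono
    (Set.union_comm _ _ ▸ Set.union_subset_union_left _ Set.subset_union_right :
      upLinks η τ l ∪ {l} ⊆ downLinks η τ l ∪ upLinks η τ l) subset_rfl
  linarith [hown hpos hneg, hinflow hpos hneg, min_add_max (x l) (c l), min_add_max (y l) (c l)]

end Network

/-- **Theorem 1.** Under Assumption 1, for a fixed signal input `s` the
traffic update map `(x, d) ↦ F(x, s, d)` on `X × [0,∞)^L` is componentwise monotone with
signature `δ l k = −1` if `k ∈ L^adj_l` and `δ l k = 1` otherwise.  In particular each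
`F_l` is nondecreasing in `x k` for `k ∈ L^down_l ∪ L^up_l`, nonincreasing in `x k` for
`k ∈ L^adj_l`, independent of `x k` for all other `k`, and nondecreasing in each `d k`. -/
theorem traffic_componentwise_monotone {L V : Type*} [Fintype L]
    (η : L → V) (τ : L → Option V) (hself : ∀ l, some (η l) ≠ τ l)
    (c xcap : L → ℝ) (hc : ∀ l, 0 < c l) (hcap : ∀ l, 0 < xcap l)
    (β : L → L → ℝ) (hβ : ∀ l k, 0 ≤ β l k)
    (hβsupp : ∀ l k, 0 < β l k → τ k = some (η l))
    (hβsum : ∀ l, ∑ k ∈ Finset.univ.filter (fun k => τ k = some (η l)), β l k ≤ 1)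
    (s : Finset L) (α : L → L → ℝ) (hα : ∀ l k, 0 < α l k)
    (hαsum : ∀ k, (Finset.univ.filter fun j => j ∈ s ∧ some (η j) = τ k).Nonempty →
      ∑ j ∈ Finset.univ.filter (fun j => j ∈ s ∧ some (η j) = τ k), α j k = 1)
    (hA1 : ∀ l k, τ l = some (η k) → 0 < β k l → c l ≤ xcap l - β k l / α k l * c k)
    (δ : L → L → ℝ)
    (hδ : ∀ l k, δ l k = if k ≠ l ∧ τ k = τ l then (-1 : ℝ) else 1) :
    -- componentwise monotonicity of (x, d) ↦ F(x, s, d) with signature δ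
    (∀ l (x x' d d' : L → ℝ),
      (∀ k, 0 ≤ x k ∧ x k ≤ xcap k) → (∀ k, 0 ≤ x' k ∧ x' k ≤ xcap k) →
      (∀ k, 0 ≤ d k) → (∀ k, 0 ≤ d' k) →
      (∀ k, δ l k * x k ≤ δ l k * x' k) → (∀ k, d k ≤ d' k) →
      Fupd η τ c xcap β α s x d l ≤ Fupd η τ c xcap β α s x' d' l) ∧
    -- F_l nondecreasing in x k for k ∈ L^down_l ∪ L^up_l
    (∀ l k, (τ k = some (η l) ∨ k = l ∨ τ l = some (η k)) →
      ∀ (x d : L → ℝ), (∀ m, 0 ≤ x m ∧ x m ≤ xcap m) → (∀ m, 0 ≤ d m) →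
      ∀ p q : ℝ, 0 ≤ p → p ≤ q → q ≤ xcap k →
        Fupd η τ c xcap β α s (Function.update x k p) d l ≤
          Fupd η τ c xcap β α s (Function.update x k q) d l) ∧
    -- F_l nonincreasing in x k for k ∈ L^adj_l
    (∀ l k, k ≠ l → τ k = τ l →
      ∀ (x d : L → ℝ), (∀ m, 0 ≤ x m ∧ x m ≤ xcap m) → (∀ m, 0 ≤ d m) →
      ∀ p q : ℝ, 0 ≤ p → p ≤ q → q ≤ xcap k →
        Fupd η τ c xcap β α s (Function.update x k q) d l ≤
          Fupd η τ c xcap β α s (Function.update x k p) d l) ∧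
    -- F_l independent of x k for all other k
    (∀ l k, ¬(τ k = some (η l) ∨ k = l ∨ τ l = some (η k)) → ¬(k ≠ l ∧ τ k = τ l) →
      ∀ (x d : L → ℝ) (p q : ℝ),
        Fupd η τ c xcap β α s (Function.update x k p) d l =
          Fupd η τ c xcap β α s (Function.update x k q) d l) ∧
    -- F_l nondecreasing in each d k
    (∀ l k (x d : L → ℝ), (∀ m, 0 ≤ x m ∧ x m ≤ xcap m) →
      ∀ p q : ℝ, 0 ≤ p → p ≤ q →
        Fupd η τ c xcap β α s x (Function.update d k p) l ≤
          Fupd η τ c xcap β α s x (Function.update d k q) l) := by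
  have hαle (k : L) : ∑ j ∈ univ.filter (fun j ↦ j ∈ s ∧ some (η j) = τ k), α j k ≤ 1 :=
    (eq_empty_or_nonempty _).elim (fun h ↦ by rw [h, sum_empty]; exact zero_le_one)
      fun h ↦ (hαsum k h).le
  have hF := traffic_componentwise_monotone_general hself hβ hβsupp hα hαle hA1
  have hdisj := disjoint_downLinks_union_upLinks_adjLinks hself
  refine ⟨fun l x x' d d' _ _ _ _ hx hd ↦ ?_, fun l k hk x d _ _ p q _ hpq _ ↦ ?_,
    fun l k hkl hτ x d _ _ p q _ hpq _ ↦ ?_, fun l k hk hadj x d p q ↦ ?_,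
    fun l k x d _ p q _ hpq ↦ ?_⟩
  · have hpos : ∀ k ∈ downLinks η τ l ∪ upLinks η τ l, 0 < δ l k := fun k hk ↦
      ((hδ l k).trans (if_neg ((hdisj l).notMem_of_mem_left hk))).symm ▸ one_pos
    have hneg : ∀ k ∈ adjLinks τ l, δ l k < 0 := fun k hk ↦
      ((hδ l k).trans (if_pos hk)).symm ▸ neg_one_lt_zero
    exact (((hF l).1 d).le_of_forall_mul_le_mul hpos hneg hx).trans
      ((hF l).2 x' (fun k _ ↦ hd k) fun _ ↦ False.elim)
  · exact ((hF l).1 d).monotone_update ((hdisj l).notMem_of_mem_left (or_assoc.2 hk)) x hpq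
  · exact ((hF l).1 d).antitone_update ((hdisj l).notMem_of_mem_right ⟨hkl, hτ⟩) x hpq
  · exact ((hF l).1 d).update_eq_update (fun h ↦ hk (or_assoc.1 h)) hadj x p q
  · exact ((hF l).2 x).monotone_update (Set.notMem_empty k) d hpq
end

section
/- Fix a signal input s, a link l, and a link k ∈ (L^down_l ∪ L^up_l) \ {l}. Then for any fixed values of all other state coordinates x_m ∈ [0, x^cap_m] (m ≠ k) and any fixed d_l ≥ 0, the map x_k ↦ F_l(x, s, d) is nondecreasing on [0, x^cap_k]. -/
open Finset
open scoped Classical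

/-!
For `k ≠ l`, `x k` acts on `F_l` only through flows: raising it lowers the outflow of `l` when `k`
is downstream, by shrinking the supply of `k`, and raises the demand of `k` when `k` is upstream.
The only opposite effect would be a shrinking supply of `k` throttling a link that feeds `l`; this
requires `k` to leave the same intersection as `l`, which is excluded since no link is a self-loop.
-/

theorem fold_min_le_fold_min {ι R : Type*} [LinearOrder R] {t : Finset ι} {a b : R} {f g : ι → R}
    (hab : a ≤ b) (hfg : ∀ i ∈ t, f i ≤ g i) : t.fold min a f ≤ t.fold min b g :=
  le_fold_min _ |>.2
    ⟨fold_min_le _ |>.2 (.inl hab), fun i hi => fold_min_le _ |>.2 (.inr ⟨i, hi, hfg i hi⟩)⟩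

section Network

variable {L V : Type*} {η : L → V} {τ : L → Option V} {β α : L → L → ℝ}

theorem tau_ne_tau_of_down_or_up (hself : ∀ l, some (η l) ≠ τ l) {l k : L}
    (hk : τ k = some (η l) ∨ τ l = some (η k)) : τ k ≠ τ l := by
  rcases hk with hdown | hup
  · exact hdown ▸ hself l
  · exact hup ▸ (hself k).symm

theorem turnRatio_nonpos_of_tau_ne_tau (hβsupp : ∀ l k, 0 < β l k → τ k = some (η l)) {j k l : L}
    (hkl : τ k ≠ τ l) (hj : τ l = some (η j)) : β j k ≤ 0 :=
  not_lt.1 fun hpos => hkl ((hβsupp j k hpos).trans hj.symm)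

variable [Fintype L]

theorem fout_le_fout (c xcap : L → ℝ) (s : Finset L) {x y : L → ℝ} {l : L}
    (hα : ∀ k, 0 ≤ α l k) (hl : x l ≤ y l) (hdown : ∀ k, 0 < β l k → y k ≤ x k) :
    fout c xcap β α s x l ≤ fout c xcap β α s y l := by
  unfold fout
  split_ifs
  · refine fold_min_le_fold_min (min_le_min_right _ hl) fun k hk => ?_
    have hβ : 0 < β l k := (mem_filter.1 hk).2
    have hratio : 0 ≤ α l k / β l k := div_nonneg (hα k) hβ.le
    exact mul_le_mul_of_nonneg_left (sub_le_sub_left (hdown k hβ) _) hratio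
  · exact le_rfl

theorem Fupd_le_Fupd (c xcap : L → ℝ) (s : Finset L) (d : L → ℝ) {x y : L → ℝ} {l : L}
    (hβ : ∀ j, 0 ≤ β j l) (hα : ∀ j k, 0 ≤ α j k) (hxy : x ≤ y) (hl : x l = y l)
    (hfed : ∀ j k, τ l = some (η j) → 0 < β j k → x k = y k) :
    Fupd η τ c xcap β α s x d l ≤ Fupd η τ c xcap β α s y d l := by
  have houtflow : fout c xcap β α s y l ≤ fout c xcap β α s x l :=
    fout_le_fout c xcap s (hα l) hl.ge fun k _ => hxy k
  have hinflow : ∑ j with τ l = some (η j), β j l * fout c xcap β α s x j ≤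
      ∑ j with τ l = some (η j), β j l * fout c xcap β α s y j :=
    sum_le_sum fun j hj => mul_le_mul_of_nonneg_left
      (fout_le_fout c xcap s (hα j) (hxy j) fun k hk => (hfed j k (mem_filter.1 hj).2 hk).ge) (hβ j)
  unfold Fupd
  gcongr
  exact hl.le

theorem Fupd_monotone_in_down_up_general (c xcap : L → ℝ) (s : Finset L) {l k : L}
    (hβ : ∀ j, 0 ≤ β j l) (hα : ∀ i j, 0 ≤ α i j) (hkl : k ≠ l)
    (hfeed : ∀ j, τ l = some (η j) → β j k ≤ 0) (x d : L → ℝ) :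
    Monotone fun t => Fupd η τ c xcap β α s (Function.update x k t) d l := by
  intro p q hpq
  refine Fupd_le_Fupd c xcap s d hβ hα (Function.update_mono hpq) ?_ fun j i hj hi => ?_
  · simp only [Function.update_of_ne hkl.symm]
  · have hik : i ≠ k := fun h => (hfeed j hj).not_gt (h ▸ hi)
    simp only [Function.update_of_ne hik]

end Network

/-- For a fixed signal `s`, link `l`, and `k ∈ (L^down_l ∪ L^up_l) \ {l}`,
with all other coordinates fixed in their capacity ranges and `d l ≥ 0`, the map
`x k ↦ F_l(x, s, d)` is nondecreasing on `[0, xcap k]`. -/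
theorem Fupd_monotone_in_down_up {L V : Type*} [Fintype L]
    (η : L → V) (τ : L → Option V) (hself : ∀ l, some (η l) ≠ τ l)
    (c xcap : L → ℝ) (hc : ∀ l, 0 < c l) (hcap : ∀ l, 0 < xcap l)
    (β : L → L → ℝ) (hβ : ∀ l k, 0 ≤ β l k)
    (hβsupp : ∀ l k, 0 < β l k → τ k = some (η l))
    (hβsum : ∀ l, ∑ k ∈ Finset.univ.filter (fun k => τ k = some (η l)), β l k ≤ 1)
    (s : Finset L) (α : L → L → ℝ) (hα : ∀ l k, 0 < α l k)
    (hαsum : ∀ k, (Finset.univ.filter fun j => j ∈ s ∧ some (η j) = τ k).Nonempty →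
      ∑ j ∈ Finset.univ.filter (fun j => j ∈ s ∧ some (η j) = τ k), α j k = 1)
    (l k : L) (hk : (τ k = some (η l) ∨ τ l = some (η k)) ∧ k ≠ l)
    (x d : L → ℝ) (hx : ∀ m, m ≠ k → 0 ≤ x m ∧ x m ≤ xcap m) (hd : 0 ≤ d l) :
    ∀ p q : ℝ, 0 ≤ p → p ≤ q → q ≤ xcap k →
      Fupd η τ c xcap β α s (Function.update x k p) d l ≤
        Fupd η τ c xcap β α s (Function.update x k q) d l :=
  have hτ : τ k ≠ τ l := tau_ne_tau_of_down_or_up hself hk.1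
  fun _ _ _ hpq _ =>
    Fupd_monotone_in_down_up_general c xcap s (hβ · l) (fun i j => (hα i j).le) hk.2
      (fun _ => turnRatio_nonpos_of_tau_ne_tau hβsupp hτ) x d hpq
end
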